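/- Let m ≥ 2 and let σ₀ = ±1 if m is odd and σ₀ = (−1)^{m/2} if m is even. Let P be an (m−1)×(m−1) real signed permutation matrix, let A be the m×m matrix with entry σ₀ in position (1, m), entries A_{i+1,j} = P_{ij} for 1 ≤ i, j ≤ m−1, and all other entries zero; let B be the m×m matrix with entries B_{i+1,j+1} = P_{ij} for 1 ≤ i, j ≤ m−1 and all other entries zero; and for τ > 0 let D_τ = diag(1, τ, τ, …, τ). Then the following are equivalent: (i) for every k ∈ ℝ and every τ > 0, every complex eigenvalue ω of D_τ⁻¹(kA + iB) satisfies Im ω ≤ 0; (ii) P = P*. -/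

import Mathlib

/-- A real signed permutation matrix: all entries in `{-1, 0, 1}`, with exactly one
nonzero entry in each row and each column. -/
def IsSignedPerm {n : ℕ} (P : Matrix (Fin n) (Fin n) ℝ) : Prop :=
  (∀ i j, P i j = -1 ∨ P i j = 0 ∨ P i j = 1) ∧
  (∀ i, ∃! j, P i j ≠ 0) ∧ (∀ j, ∃! i, P i j ≠ 0)

/-- The m×m matrix with entry `s` in (1-indexed) position (1, m), the matrix `P` in
positions `A_{i+1,j} = P_{ij}` for `1 ≤ i, j ≤ m-1`, and all other entries zero. -/
noncomputable def embedA (m : ℕ) (s : ℝ) (P : Matrix (Fin (m-1)) (Fin (m-1)) ℝ) :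
    Matrix (Fin m) (Fin m) ℝ := fun i j =>
  if hi : (i : ℕ) = 0 then (if (j : ℕ) = m - 1 then s else 0)
  else if hj : (j : ℕ) < m - 1 then
    P ⟨(i : ℕ) - 1, by have := i.isLt; omega⟩ ⟨(j : ℕ), hj⟩
  else 0

/-- The m×m matrix with entries `B_{i+1,j+1} = P_{ij}` (1-indexed) for `1 ≤ i, j ≤ m-1`
and all other entries zero. -/
noncomputable def embedB (m : ℕ) (P : Matrix (Fin (m-1)) (Fin (m-1)) ℝ) :
    Matrix (Fin m) (Fin m) ℝ := fun i j =>
  if h : (i : ℕ) = 0 ∨ (j : ℕ) = 0 then 0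
  else P ⟨(i : ℕ) - 1, by have := i.isLt; omega⟩ ⟨(j : ℕ) - 1, by have := j.isLt; omega⟩

/-- The (m-1)×(m-1) matrix `P*` with (1-indexed) entries `p_{ij} = 0` if `i + j ≠ m`,
and for `i + j = m`: `p_{ij} = σ₀ (-1)^(j-1)` if `j ≤ m/2`, `p_{ij} = σ₀ (-1)^(m-j)`
if `j > m/2`. -/
noncomputable def Pstar (m : ℕ) (σ₀ : ℝ) : Matrix (Fin (m-1)) (Fin (m-1)) ℝ := fun i j =>
  if (i : ℕ) + (j : ℕ) + 2 = m then
    (if 2 * ((j : ℕ) + 1) ≤ m then σ₀ * (-1) ^ (j : ℕ)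
     else σ₀ * (-1) ^ (m - ((j : ℕ) + 1)))
  else 0

/-- The diagonal matrix `D_τ = diag(1, τ, τ, …, τ)` (as a complex matrix). -/
noncomputable def Dmat (m : ℕ) (τ : ℝ) : Matrix (Fin m) (Fin m) ℂ :=
  Matrix.diagonal (fun i => if (i : ℕ) = 0 then 1 else (τ : ℂ))

/-
Since `P` is orthogonal, `A` is orthogonal and `B` is normal. Dividing `kA + iB` by `k` and letting
`k → ±∞` puts the spectrum of `A` in both closed half-planes, so a normal `A` is Hermitian; `k = 0`
puts the spectrum of the normal matrix `B` in the left half-plane, so `-(B + Bᴴ) ≥ 0`. Conversely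
these two properties bound the imaginary part of the form `v ↦ v* (kA + iB) v` from above by `0`,
whence the spectral bound for `D⁻¹ (kA + iB)` with any positive definite `D`.

Symmetry of `A` is invariance of the entries of `P` under `(i, j) ↦ (j - 1, i + 1)`, with corner
entry `σ₀`; semidefiniteness of `-(P + Pᵀ)` makes `P` antisymmetric along every row with vanishing
diagonal entry. Alternating the two moves, starting from the corner, determines the antidiagonal of
`P`, whose entries are `±1`; orthogonality then leaves no room for other entries. For even `m` the
antidiagonal meets the diagonal, and the sign of that entry is the parity condition on `σ₀`.
-/

open scoped Matrix ComplexOrder Pointwise Topology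

/-! ### Normal elements and dissipativity -/

section Spectrum

variable {n : Type*} [Fintype n] [DecidableEq n]

lemma pow_natDegree_le_norm_eval {𝕜 : Type*} [NormedField 𝕜] {p : Polynomial 𝕜} (hp : p.Splits)
    (hmonic : p.Monic) {r : ℝ} (hr : 0 ≤ r) {w : 𝕜} (h : ∀ z ∈ p.roots, r ≤ ‖w - z‖) :
    r ^ p.natDegree ≤ ‖p.eval w‖ := by
  have hnorm : ‖p.eval w‖ = (p.roots.map fun z => ‖w - z‖).prod := by
    rw [hp.eval_eq_prod_roots_of_monic hmonic]
    exact (p.roots.prod_hom' normHom fun z => w - z).symm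
  rw [hnorm, hp.natDegree_eq_card_roots, ← Multiset.prod_replicate, ← Multiset.map_const']
  exact Multiset.prod_map_le_prod_map₀ _ _ (fun _ _ => hr) h

lemma isClosed_setOf_spectrum_subset {𝕜 : Type*} [NormedField 𝕜] [IsAlgClosed 𝕜] {S : Set 𝕜}
    (hS : IsClosed S) : IsClosed {M : Matrix n n 𝕜 | spectrum 𝕜 M ⊆ S} := by
  refine isClosed_of_closure_subset fun M hM w hw => ?_
  by_contra hwS
  obtain ⟨r, hr, hball⟩ := Metric.isOpen_iff.1 hS.isOpen_compl w hwS
  -- An eigenvalue-free ball of radius `r` gives `r ^ n ≤ |χ_N(w)|`, a closed condition on `N`.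
  have hsub : {N : Matrix n n 𝕜 | spectrum 𝕜 N ⊆ S} ⊆
      {N | r ^ Fintype.card n ≤ ‖N.charpoly.eval w‖} := fun N hN => by
    rw [Set.mem_ofPred_eq, ← N.charpoly_natDegree_eq_dim]
    refine pow_natDegree_le_norm_eval (IsAlgClosed.splits _) N.charpoly_monic hr.le fun z hz => ?_
    have hzS : z ∈ S :=
      hN (Matrix.mem_spectrum_iff_isRoot_charpoly.2 (Polynomial.isRoot_of_mem_roots hz))
    by_contra! hlt
    exact hball (by rwa [Metric.mem_ball, dist_eq_norm, norm_sub_rev]) hzS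
  have hclosed : IsClosed {N : Matrix n n 𝕜 | r ^ Fintype.card n ≤ ‖N.charpoly.eval w‖} := by
    simp only [Matrix.eval_charpoly]
    exact isClosed_le continuous_const (by fun_prop)
  have hle : r ^ Fintype.card n ≤ ‖M.charpoly.eval w‖ := closure_minimal hsub hclosed hM
  rw [(Matrix.mem_spectrum_iff_isRoot_charpoly.1 hw).eq_zero, norm_zero] at hle
  exact hle.not_gt (pow_pos hr _)

lemma spectrum_subset_of_forall_pos_smul_add {S : Set ℂ} (hS : IsClosed S)
    (hcone : ∀ c : ℝ, 0 < c → (c : ℂ) • S ⊆ S) {X Y : Matrix n n ℂ}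
    (h : ∀ k : ℝ, 0 < k → spectrum ℂ ((k : ℂ) • X + Y) ⊆ S) : spectrum ℂ X ⊆ S := by
  have hpos : ∀ ε : ℝ, 0 < ε → spectrum ℂ (X + (ε : ℂ) • Y) ⊆ S := fun ε hε => by
    have hε' : (ε : ℂ) ≠ 0 := by exact_mod_cast hε.ne'
    have hscale : X + (ε : ℂ) • Y = Units.mk0 _ hε' • (((ε⁻¹ : ℝ) : ℂ) • X + Y) := by
      simp [Units.smul_def, smul_smul, hε']
    rw [hscale, spectrum.unit_smul_eq_smul]
    exact (Set.smul_set_mono (h _ (inv_pos.2 hε))).trans (hcone ε hε)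
  have hlim : Filter.Tendsto (fun ε : ℝ => X + (ε : ℂ) • Y) (𝓝[>] 0) (𝓝 X) := by
    have hcont : Continuous fun ε : ℝ => X + (ε : ℂ) • Y := by fun_prop
    simpa using (hcont.tendsto 0).mono_left nhdsWithin_le_nhds
  exact (isClosed_setOf_spectrum_subset hS).mem_of_tendsto hlim
    (Filter.eventually_of_mem self_mem_nhdsWithin hpos)

lemma im_eq_zero_of_mem_spectrum_of_forall_smul_add {X Y : Matrix n n ℂ}
    (h : ∀ k : ℝ, ∀ ω ∈ spectrum ℂ ((k : ℂ) • X + Y), ω.im ≤ 0) {z : ℂ}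
    (hz : z ∈ spectrum ℂ X) : z.im = 0 := by
  have hclosed : IsClosed {z : ℂ | z.im ≤ 0} := isClosed_le Complex.continuous_im continuous_const
  have hcone : ∀ c : ℝ, 0 < c → (c : ℂ) • {z : ℂ | z.im ≤ 0} ⊆ {z : ℂ | z.im ≤ 0} := by
    rintro c hc _ ⟨z, hz, rfl⟩
    simpa using mul_nonpos_of_nonneg_of_nonpos hc.le hz
  have hle : z.im ≤ 0 := spectrum_subset_of_forall_pos_smul_add hclosed hcone (fun k _ => h k) hz
  have hge : (-z).im ≤ 0 := by
    refine spectrum_subset_of_forall_pos_smul_add (X := -X) (Y := Y) hclosed hcone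
      (fun k _ ω hω => h (-k) ω (by simpa using hω)) ?_
    rwa [← spectrum.neg_eq, Set.neg_mem_neg]
  exact le_antisymm hle (by simpa using hge)

lemma add_star_nonpos_of_re_spectrum_nonpos {A : Type*} [CStarAlgebra A] [PartialOrder A]
    [StarOrderedRing A] {a : A} (ha : IsStarNormal a) (h : ∀ z ∈ spectrum ℂ a, z.re ≤ 0) :
    a + star a ≤ 0 := by
  have hcfc : cfc (fun z : ℂ => z + star z) a = a + star a := by
    rw [cfc_add a (fun z : ℂ => z) (fun z => star z), cfc_id' ℂ a, cfc_star_id a]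
  rw [← hcfc]
  refine cfc_nonpos _ a fun z hz => ?_
  rw [Complex.star_def, Complex.add_conj]
  exact_mod_cast mul_nonpos_of_nonneg_of_nonpos zero_le_two (h z hz)

section L2OpNorm

open scoped MatrixOrder Matrix.Norms.L2Operator

lemma isHermitian_of_isStarNormal_of_im_spectrum_eq_zero {X : Matrix n n ℂ} (hX : IsStarNormal X)
    (h : ∀ z ∈ spectrum ℂ X, z.im = 0) : X.IsHermitian := by
  have hreal : SpectrumRestricts X Complex.reCLM :=
    SpectrumRestricts.real_iff.2 fun z hz => Complex.ext rfl (h z hz)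
  exact QuasispectrumRestricts.isSelfAdjoint X hreal

lemma posSemidef_neg_add_conjTranspose_of_re_spectrum_nonpos {X : Matrix n n ℂ}
    (hX : IsStarNormal X) (h : ∀ z ∈ spectrum ℂ X, z.re ≤ 0) : (-(X + Xᴴ)).PosSemidef :=
  Matrix.nonneg_iff_posSemidef.1 (neg_nonneg.2 (add_star_nonpos_of_re_spectrum_nonpos hX h))

end L2OpNorm

theorem isHermitian_and_posSemidef_of_forall_im_spectrum_nonpos {A B : Matrix n n ℂ}
    (hA : IsStarNormal A) (hB : IsStarNormal B)
    (h : ∀ k : ℝ, ∀ ω ∈ spectrum ℂ ((k : ℂ) • A + Complex.I • B), ω.im ≤ 0) :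
    A.IsHermitian ∧ (-(B + Bᴴ)).PosSemidef := by
  refine ⟨isHermitian_of_isStarNormal_of_im_spectrum_eq_zero hA fun z =>
      im_eq_zero_of_mem_spectrum_of_forall_smul_add h,
    posSemidef_neg_add_conjTranspose_of_re_spectrum_nonpos hB fun z hz => ?_⟩
  have hIz : Complex.I * z ∈ spectrum ℂ (Complex.I • B) :=
    spectrum.smul_mem_smul_iff (r := Units.mk0 _ Complex.I_ne_zero) |>.2 hz
  have him : (Complex.I * z).im ≤ 0 := h 0 _ (by simpa using hIz)
  rwa [Complex.I_mul_im] at him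

lemma exists_mulVec_eq_smul_of_mem_spectrum {K : Type*} [Field K] {M : Matrix n n K} {μ : K}
    (hμ : μ ∈ spectrum K M) : ∃ v ≠ 0, M *ᵥ v = μ • v := by
  rw [← Matrix.spectrum_toLin', ← Module.End.hasEigenvalue_iff_mem_spectrum] at hμ
  obtain ⟨v, hv⟩ := hμ.exists_hasEigenvector
  exact ⟨v, hv.2, hv.apply_eq_smul⟩

lemma im_nonpos_of_mem_spectrum_inv_mul {D M : Matrix n n ℂ} (hD : D.PosDef)
    (hM : ∀ v, (star v ⬝ᵥ M *ᵥ v).im ≤ 0) {ω : ℂ} (hω : ω ∈ spectrum ℂ (D⁻¹ * M)) :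
    ω.im ≤ 0 := by
  obtain ⟨v, hv, hωv⟩ := exists_mulVec_eq_smul_of_mem_spectrum hω
  have hMv : M *ᵥ v = ω • D *ᵥ v := by
    rw [← Matrix.mulVec_smul, ← hωv, Matrix.mulVec_mulVec,
      Matrix.mul_nonsing_inv_cancel_left _ _ (D.isUnit_iff_isUnit_det.1 hD.isUnit)]
  obtain ⟨d, hd, hdv⟩ : ∃ d : ℝ, 0 < d ∧ (d : ℂ) = star v ⬝ᵥ D *ᵥ v :=
    RCLike.pos_iff_exists_ofReal.1 (hD.dotProduct_mulVec_pos hv)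
  have him : ω.im * d ≤ 0 := by
    simpa [hMv, dotProduct_smul, ← hdv] using hM v
  exact nonpos_of_mul_nonpos_left him hd

lemma im_dotProduct_smul_add_I_smul_nonpos {ι : Type*} [Fintype ι] {A B : Matrix ι ι ℂ}
    (hA : A.IsHermitian) (hB : (-(B + Bᴴ)).PosSemidef) (k : ℝ) (v : ι → ℂ) :
    (star v ⬝ᵥ ((k : ℂ) • A + Complex.I • B) *ᵥ v).im ≤ 0 := by
  have hAv : (star v ⬝ᵥ A *ᵥ v).im = 0 := hA.im_star_dotProduct_mulVec_self v
  have hconj : star v ⬝ᵥ Bᴴ *ᵥ v = star (star v ⬝ᵥ B *ᵥ v) := by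
    rw [Matrix.star_dotProduct, Matrix.star_mulVec, Matrix.conjTranspose_conjTranspose,
      Matrix.dotProduct_mulVec]
  have hBv : (star v ⬝ᵥ B *ᵥ v).re ≤ 0 := by
    have hre := (Complex.le_def.1 (hB.dotProduct_mulVec_nonneg v)).1
    simp only [Matrix.neg_mulVec, Matrix.add_mulVec, dotProduct_neg, dotProduct_add, hconj,
      Complex.zero_re, Complex.neg_re, Complex.add_re, Complex.star_def, Complex.conj_re] at hre
    linarith
  simpa [Matrix.add_mulVec, Matrix.smul_mulVec, dotProduct_add, hAv] using hBv

end Spectrum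

/-! ### Real matrices and their complexifications -/

section RealMatrix

variable {n : Type*}

lemma isStarNormal_map_ofReal [Fintype n] {X : Matrix n n ℝ} (hX : X * Xᵀ = Xᵀ * X) :
    IsStarNormal (X.map Complex.ofReal) := by
  have hstar : star (X.map Complex.ofReal) = Xᵀ.map Complex.ofReal := by
    ext i j
    simp [Matrix.star_apply]
  have hmap := congrArg (fun Y => Matrix.map Y Complex.ofRealHom) hX.symm
  simp only [Matrix.map_mul] at hmap
  exact ⟨by rw [hstar]; exact hmap⟩

lemma isHermitian_map_ofReal_iff {X : Matrix n n ℝ} :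
    (X.map Complex.ofReal).IsHermitian ↔ X.IsSymm := by
  simp [Matrix.IsHermitian.ext_iff, Matrix.IsSymm.ext_iff]

lemma neg_add_conjTranspose_map_ofReal (X : Matrix n n ℝ) :
    -(X.map Complex.ofReal + (X.map Complex.ofReal)ᴴ) = (-(X + Xᵀ)).map Complex.ofReal := by
  ext i j
  simp

lemma diag_nonpos_of_posSemidef_neg_add_conjTranspose {X : Matrix n n ℝ}
    (hX : (-(X.map Complex.ofReal + (X.map Complex.ofReal)ᴴ)).PosSemidef) (i : n) :
    X i i ≤ 0 := by
  rw [neg_add_conjTranspose_map_ofReal] at hX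
  have hdiag : 0 ≤ ((-(X i i + X i i) : ℝ) : ℂ) := hX.diag_nonneg
  rw [Complex.zero_le_real] at hdiag
  linarith

lemma apply_eq_zero_of_posSemidef [Finite n] {𝕜 : Type*} [RCLike 𝕜] {M : Matrix n n 𝕜}
    (hM : M.PosSemidef) {i : n} (hi : M i i = 0) (j : n) : M j i = 0 := by
  have := Fintype.ofFinite n
  classical
  have hcol : M *ᵥ Pi.single i 1 = 0 := (hM.dotProduct_mulVec_zero_iff _).1 (by simp [hi])
  simpa using congrFun hcol j

lemma apply_eq_neg_apply_of_posSemidef_neg_add_conjTranspose [Finite n]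
    {X : Matrix n n ℝ} (hX : (-(X.map Complex.ofReal + (X.map Complex.ofReal)ᴴ)).PosSemidef) {i : n}
    (hi : X i i = 0) (j : n) : X i j = -X j i := by
  rw [neg_add_conjTranspose_map_ofReal] at hX
  have hij : ((-(X j i + X i j) : ℝ) : ℂ) = 0 :=
    apply_eq_zero_of_posSemidef hX (i := i) (by simp [hi]) j
  rw [Complex.ofReal_eq_zero] at hij
  linarith

lemma posSemidef_neg_add_conjTranspose_map_ofReal {X : Matrix n n ℝ}
    (hX : ∀ i j, i ≠ j → X i j = -X j i) (hdiag : ∀ i, X i i ≤ 0) :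
    (-(X.map Complex.ofReal + (X.map Complex.ofReal)ᴴ)).PosSemidef := by
  classical
  have hX' : -(X.map Complex.ofReal + (X.map Complex.ofReal)ᴴ) =
      Matrix.diagonal fun i => ((-(X i i + X i i) : ℝ) : ℂ) := by
    rw [neg_add_conjTranspose_map_ofReal]
    ext i j
    obtain rfl | hij := eq_or_ne i j
    · simp
    · simp [hij, hX i j hij]
  rw [hX']
  refine .diagonal fun i => ?_
  exact Complex.zero_le_real.2 (by linarith [hdiag i])

lemma mul_transpose_eq_transpose_mul_of_mem_orthogonalGroup [Fintype n] [DecidableEq n]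
    {R : Type*} [CommRing R] {P : Matrix n n R} (hP : P ∈ Matrix.orthogonalGroup n R) :
    P * Pᵀ = Pᵀ * P :=
  ((Matrix.mem_orthogonalGroup_iff n R).1 hP).trans
    ((Matrix.mem_orthogonalGroup_iff' n R).1 hP).symm

lemma apply_eq_zero_of_mem_orthogonalGroup [Fintype n] [DecidableEq n] {R : Type*} [CommRing R]
    [LinearOrder R] [IsStrictOrderedRing R] {P : Matrix n n R}
    (hP : P ∈ Matrix.orthogonalGroup n R) {i j : n} (hij : P i j ^ 2 = 1) {k : n}
    (hk : k ≠ j) : P i k = 0 := by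
  have hrow : ∑ l, P i l ^ 2 = 1 := by
    simpa [Matrix.mul_apply, sq] using
      congrFun₂ ((Matrix.mem_orthogonalGroup_iff n R).1 hP) i i
  have hle : P i k ^ 2 + P i j ^ 2 ≤ ∑ l, P i l ^ 2 :=
    Finset.add_le_sum (fun _ _ => sq_nonneg _) (Finset.mem_univ k) (Finset.mem_univ j) hk
  exact pow_eq_zero_iff two_ne_zero |>.1 (le_antisymm (by linarith) (sq_nonneg _))

end RealMatrix

/-! ### The matrices `A`, `B` and `P*` -/

lemma IsSignedPerm.mem_orthogonalGroup {n : ℕ} {P : Matrix (Fin n) (Fin n) ℝ}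
    (hP : IsSignedPerm P) : P ∈ Matrix.orthogonalGroup (Fin n) ℝ := by
  obtain ⟨hentry, hrow, hcol⟩ := hP
  rw [Matrix.mem_orthogonalGroup_iff]
  ext i j
  obtain ⟨k, hk, hk'⟩ := hrow i
  have hsum : (P * Pᵀ) i j = P i k * P j k := by
    rw [Matrix.mul_apply]
    refine Finset.sum_eq_single k (fun l _ hl => ?_) (by simp)
    simp [not_imp_comm.1 (hk' l) hl]
  rw [hsum]
  obtain rfl | hij := eq_or_ne i j
  · obtain h | h | h := hentry i k <;> simp_all
  · simp [hij, not_imp_comm.1 ((hcol k).unique hk) hij]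

section Embedding

variable {n : ℕ} (σ : ℝ) (P : Matrix (Fin n) (Fin n) ℝ)

lemma embedA_zero_last : embedA (n + 1) σ P 0 (Fin.last n) = σ := by
  simp [embedA]

lemma embedA_zero_castSucc (j : Fin n) : embedA (n + 1) σ P 0 j.castSucc = 0 := by
  simp [embedA, j.isLt.ne]

lemma embedA_succ_last (i : Fin n) : embedA (n + 1) σ P i.succ (Fin.last n) = 0 := by
  simp [embedA]

lemma embedA_succ_castSucc (i j : Fin n) : embedA (n + 1) σ P i.succ j.castSucc = P i j := by
  simp [embedA]

lemma embedB_zero_left (j : Fin (n + 1)) : embedB (n + 1) P 0 j = 0 := by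
  simp [embedB]

lemma embedB_zero_right (i : Fin (n + 1)) : embedB (n + 1) P i 0 = 0 := by
  simp [embedB]

lemma embedB_succ_succ (i j : Fin n) : embedB (n + 1) P i.succ j.succ = P i j := by
  simp [embedB]

variable {σ P}

lemma embedA_mem_orthogonalGroup (hσ : σ ^ 2 = 1) (hP : P ∈ Matrix.orthogonalGroup (Fin n) ℝ) :
    embedA (n + 1) σ P ∈ Matrix.orthogonalGroup (Fin (n + 1)) ℝ := by
  rw [Matrix.mem_orthogonalGroup_iff] at hP ⊢
  have hrow : ∀ i j, ∑ k, P i k * P j k = (1 : Matrix (Fin n) (Fin n) ℝ) i j := fun i j => by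
    rw [← hP, Matrix.mul_apply]
    rfl
  ext i j
  rw [Matrix.mul_apply, Fin.sum_univ_castSucc]
  cases i using Fin.cases <;> cases j using Fin.cases <;>
    simp [embedA_zero_last, embedA_zero_castSucc, embedA_succ_last, embedA_succ_castSucc, hrow,
      Matrix.one_apply, ← sq, hσ, Fin.succ_ne_zero, (Fin.succ_ne_zero _).symm]

lemma embedB_transpose : (embedB (n + 1) P)ᵀ = embedB (n + 1) Pᵀ := by
  ext i j
  cases i using Fin.cases <;> cases j using Fin.cases <;>
    simp [embedB_zero_left, embedB_zero_right, embedB_succ_succ]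

lemma embedB_mul (Q : Matrix (Fin n) (Fin n) ℝ) :
    embedB (n + 1) P * embedB (n + 1) Q = embedB (n + 1) (P * Q) := by
  ext i j
  rw [Matrix.mul_apply, Fin.sum_univ_succ]
  cases i using Fin.cases <;> cases j using Fin.cases <;>
    simp [embedB_zero_left, embedB_zero_right, embedB_succ_succ, Matrix.mul_apply]

lemma isStarNormal_map_embedA (hσ : σ ^ 2 = 1) (hP : P ∈ Matrix.orthogonalGroup (Fin n) ℝ) :
    IsStarNormal ((embedA (n + 1) σ P).map Complex.ofReal) :=
  isStarNormal_map_ofReal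
    (mul_transpose_eq_transpose_mul_of_mem_orthogonalGroup (embedA_mem_orthogonalGroup hσ hP))

lemma isStarNormal_map_embedB (hP : P * Pᵀ = Pᵀ * P) :
    IsStarNormal ((embedB (n + 1) P).map Complex.ofReal) :=
  isStarNormal_map_ofReal (by rw [embedB_transpose, embedB_mul, embedB_mul, hP])

end Embedding

section Pstar

variable {n : ℕ}

lemma Pstar_succ_apply (σ : ℝ) (i j : Fin n) :
    Pstar (n + 1) σ i j = if i = j.rev then σ * (-1) ^ min (i + 1 : ℕ) j else 0 := by
  have hrev : i = j.rev ↔ (i : ℕ) + j + 2 = n + 1 := by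
    rw [Fin.ext_iff, Fin.val_rev]
    omega
  simp only [Pstar, hrev, ← mul_ite]
  split_ifs <;> congr 2 <;> omega

lemma isSymm_embedA_Pstar (σ : ℝ) : (embedA (n + 1) σ (Pstar (n + 1) σ)).IsSymm := by
  have happly : ∀ a b, embedA (n + 1) σ (Pstar (n + 1) σ) a b =
      if a = b.rev then σ * (-1) ^ min (a : ℕ) b else 0 := fun a b => by
    cases a using Fin.cases <;> cases b using Fin.lastCases <;>
      simp [embedA_zero_last, embedA_zero_castSucc, embedA_succ_last, embedA_succ_castSucc,
        Pstar_succ_apply, Fin.rev_castSucc, Fin.succ_ne_zero, (Fin.succ_ne_zero _).symm]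
  refine Matrix.IsSymm.ext fun a b => ?_
  simp only [happly, min_comm (b : ℕ), ← Fin.rev_eq_iff, eq_comm (a := b)]

lemma Pstar_apply_comm_of_ne (σ : ℝ) {i j : Fin n} (hij : i ≠ j) :
    Pstar (n + 1) σ i j = -Pstar (n + 1) σ j i := by
  have hsymm : j = i.rev ↔ i = j.rev := by rw [eq_comm, Fin.rev_eq_iff]
  rw [Pstar_succ_apply, Pstar_succ_apply, ← mul_ite_zero, ← mul_ite_zero]
  simp only [hsymm]
  split_ifs with h
  · obtain hlt | hlt := lt_or_gt_of_ne (Fin.val_ne_iff.2 hij)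
    · rw [min_eq_left (by omega), min_eq_right (by omega), pow_succ]
      ring
    · rw [min_eq_right (by omega), min_eq_left (by omega), pow_succ]
      ring
  · simp

lemma Pstar_diag_nonpos_iff {σ : ℝ} (hσ : σ = 1 ∨ σ = -1) :
    (∀ i, Pstar (n + 1) σ i i ≤ 0) ↔ (Even (n + 1) → σ = (-1) ^ ((n + 1) / 2)) := by
  have hsign : ∀ c : ℕ, σ * (-1) ^ c ≤ 0 ↔ σ = (-1) ^ (c + 1) := fun c => by
    obtain rfl | rfl := hσ <;> obtain h | h := neg_one_pow_eq_or ℝ c <;> norm_num [pow_succ, h]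
  simp only [Pstar_succ_apply]
  constructor
  · rintro h ⟨c, hc⟩
    have hdiag := h ⟨c - 1, by omega⟩
    have hmin : min (c - 1 + 1) (c - 1) + 1 = (n + 1) / 2 := by omega
    rwa [if_pos (Fin.ext (by simp only [Fin.val_rev]; omega)), hsign, hmin] at hdiag
  · intro h i
    split_ifs with hi
    · have hn : n + 1 = 2 * (i + 1) := by
        rw [Fin.ext_iff, Fin.val_rev] at hi
        omega
      rw [min_eq_right (by omega), hsign, h ⟨i + 1, by omega⟩, hn,
        Nat.mul_div_cancel_left _ two_pos]
    · exact le_rfl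

end Pstar

section Uniqueness

lemma mul_neg_one_pow_sq {R : Type*} [CommMonoid R] [HasDistribNeg R] (a : R) (c : ℕ) :
    (a * (-1) ^ c) ^ 2 = a ^ 2 := by
  rw [mul_pow, pow_right_comm, neg_one_sq, one_pow, mul_one]

variable {k : ℕ} {σ : ℝ} {P : Matrix (Fin (k + 1)) (Fin (k + 1)) ℝ}

lemma apply_last_zero_of_isSymm_embedA (hA : (embedA (k + 2) σ P).IsSymm) :
    P (Fin.last k) 0 = σ := by
  have h := hA.apply 0 (Fin.last (k + 1))
  rwa [embedA_zero_last, ← Fin.succ_last, ← Fin.castSucc_zero, embedA_succ_castSucc] at h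

lemma apply_castSucc_succ_of_isSymm_embedA (hA : (embedA (k + 2) σ P).IsSymm) (i j : Fin k) :
    P i.castSucc j.succ = P j.castSucc i.succ := by
  have h := hA.apply j.castSucc.succ i.castSucc.succ
  nth_rw 1 [Fin.succ_castSucc j] at h
  rwa [Fin.succ_castSucc i, embedA_succ_castSucc, ← Fin.succ_castSucc i, embedA_succ_castSucc] at h

lemma apply_rev_self_of_le_rev (hσ : σ ^ 2 = 1)
    (hP : P ∈ Matrix.orthogonalGroup (Fin (k + 1)) ℝ) (hA : (embedA (k + 2) σ P).IsSymm)
    (hB : ∀ i, P i i = 0 → ∀ j, P i j = -P j i) (j : Fin (k + 1)) (hj : j ≤ j.rev) :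
    P j.rev j = σ * (-1) ^ (j : ℕ) := by
  induction j using Fin.induction with
  | zero => simpa using apply_last_zero_of_isSymm_embedA hA
  | succ j ih =>
    have hlt : j.castSucc < j.castSucc.rev := by
      rw [Fin.le_def, Fin.val_rev, Fin.val_succ] at hj
      rw [Fin.lt_def, Fin.val_rev, Fin.val_castSucc]
      omega
    have hprev : P j.castSucc.rev j.castSucc = σ * (-1) ^ (j : ℕ) := ih hlt.le
    have hdiag : P j.castSucc.rev j.castSucc.rev = 0 :=
      apply_eq_zero_of_mem_orthogonalGroup hP (by rw [hprev, mul_neg_one_pow_sq, hσ]) hlt.ne'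
    calc P j.succ.rev j.succ
        = P j.castSucc j.castSucc.rev := by
          rw [Fin.rev_succ, apply_castSucc_succ_of_isSymm_embedA hA, Fin.rev_castSucc]
      _ = -P j.castSucc.rev j.castSucc := by rw [hB _ hdiag, neg_neg]
      _ = σ * (-1) ^ (j.succ : ℕ) := by rw [hprev, Fin.val_succ, pow_succ]; ring

lemma apply_rev_self (hσ : σ ^ 2 = 1) (hP : P ∈ Matrix.orthogonalGroup (Fin (k + 1)) ℝ)
    (hA : (embedA (k + 2) σ P).IsSymm) (hB : ∀ i, P i i = 0 → ∀ j, P i j = -P j i)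
    (j : Fin (k + 1)) : P j.rev j = σ * (-1) ^ min (j.rev + 1 : ℕ) j := by
  obtain hj | hj := le_or_gt j j.rev
  · rw [apply_rev_self_of_le_rev hσ hP hA hB j hj, min_eq_right (by omega)]
  · have hrefl : P j j.rev = σ * (-1) ^ (j.rev : ℕ) := by
      simpa using apply_rev_self_of_le_rev hσ hP hA hB j.rev (by simpa using hj.le)
    have hdiag : P j j = 0 :=
      apply_eq_zero_of_mem_orthogonalGroup hP (by rw [hrefl, mul_neg_one_pow_sq, hσ]) hj.ne'
    rw [← neg_eq_iff_eq_neg.2 (hB j hdiag j.rev), hrefl, min_eq_left (by omega), pow_succ]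
    ring

lemma eq_Pstar_of_isSymm_embedA {n : ℕ} {P : Matrix (Fin n) (Fin n) ℝ} (hσ : σ ^ 2 = 1)
    (hP : P ∈ Matrix.orthogonalGroup (Fin n) ℝ) (hA : (embedA (n + 1) σ P).IsSymm)
    (hB : ∀ i, P i i = 0 → ∀ j, P i j = -P j i) : P = Pstar (n + 1) σ := by
  cases n with
  | zero => exact Subsingleton.elim _ _
  | succ k =>
    ext i j
    rw [Pstar_succ_apply]
    split_ifs with hij
    · rw [hij, apply_rev_self hσ hP hA hB]
    · have hsq : P i i.rev ^ 2 = 1 := by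
        have h := apply_rev_self hσ hP hA hB i.rev
        rw [Fin.rev_rev] at h
        rw [h, mul_neg_one_pow_sq, hσ]
      exact apply_eq_zero_of_mem_orthogonalGroup hP hsq fun h => hij (Fin.rev_eq_iff.1 h.symm)

end Uniqueness

section Characterization

variable {n : ℕ} {σ : ℝ} {P : Matrix (Fin n) (Fin n) ℝ}

lemma eq_Pstar_and_parity_of_isHermitian_of_posSemidef (hσ : σ = 1 ∨ σ = -1)
    (hP : P ∈ Matrix.orthogonalGroup (Fin n) ℝ)
    (hA : ((embedA (n + 1) σ P).map Complex.ofReal).IsHermitian)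
    (hB : (-((embedB (n + 1) P).map Complex.ofReal +
      ((embedB (n + 1) P).map Complex.ofReal)ᴴ)).PosSemidef) :
    P = Pstar (n + 1) σ ∧ (Even (n + 1) → σ = (-1) ^ ((n + 1) / 2)) := by
  have hanti : ∀ i, P i i = 0 → ∀ j, P i j = -P j i := fun i hi j => by
    simpa only [embedB_succ_succ] using apply_eq_neg_apply_of_posSemidef_neg_add_conjTranspose hB
      (i := i.succ) (by rw [embedB_succ_succ, hi]) j.succ
  have heq : P = Pstar (n + 1) σ :=
    eq_Pstar_of_isSymm_embedA (sq_eq_one_iff.2 hσ) hP (isHermitian_map_ofReal_iff.1 hA) hanti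
  refine ⟨heq, (Pstar_diag_nonpos_iff hσ).1 fun i => ?_⟩
  rw [← heq, ← embedB_succ_succ P]
  exact diag_nonpos_of_posSemidef_neg_add_conjTranspose hB _

lemma posSemidef_neg_embedB_Pstar (hσ : σ = 1 ∨ σ = -1)
    (hparity : Even (n + 1) → σ = (-1) ^ ((n + 1) / 2)) :
    (-((embedB (n + 1) (Pstar (n + 1) σ)).map Complex.ofReal +
      ((embedB (n + 1) (Pstar (n + 1) σ)).map Complex.ofReal)ᴴ)).PosSemidef := by
  refine posSemidef_neg_add_conjTranspose_map_ofReal (fun i j hij => ?_) fun i => ?_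
  · cases i using Fin.cases <;> cases j using Fin.cases
    case succ.succ i j =>
      simpa only [embedB_succ_succ] using Pstar_apply_comm_of_ne σ (ne_of_apply_ne Fin.succ hij)
    all_goals simp only [embedB_zero_left, embedB_zero_right, neg_zero]
  · cases i using Fin.cases with
    | zero => rw [embedB_zero_left]
    | succ i => simpa only [embedB_succ_succ] using (Pstar_diag_nonpos_iff hσ).2 hparity i

end Characterization

lemma posDef_Dmat {m : ℕ} {τ : ℝ} (hτ : 0 < τ) : (Dmat m τ).PosDef := by
  refine .diagonal fun i => ?_
  split_ifs
  · exact one_pos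
  · exact Complex.zero_lt_real.2 hτ

lemma Dmat_one (m : ℕ) : Dmat m 1 = 1 := by
  simp [Dmat]

theorem stmt7_general (m : ℕ) (hm : 1 ≤ m) (σ₀ : ℝ) (hσ : σ₀ = 1 ∨ σ₀ = -1)
    (P : Matrix (Fin (m - 1)) (Fin (m - 1)) ℝ)
    (hP : P ∈ Matrix.orthogonalGroup (Fin (m - 1)) ℝ) :
    (∀ k τ : ℝ, 0 < τ →
      ∀ ω ∈ spectrum ℂ ((Dmat m τ)⁻¹ *
          ((k : ℂ) • (embedA m σ₀ P).map Complex.ofReal +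
            Complex.I • (embedB m P).map Complex.ofReal)),
        ω.im ≤ 0) ↔
    P = Pstar m σ₀ ∧ (Even m → σ₀ = (-1) ^ (m / 2)) := by
  obtain ⟨n, rfl⟩ := Nat.exists_eq_add_of_le' hm
  constructor
  · intro h
    obtain ⟨hA, hB⟩ := isHermitian_and_posSemidef_of_forall_im_spectrum_nonpos
      (isStarNormal_map_embedA (sq_eq_one_iff.2 hσ) hP) (isStarNormal_map_embedB
        (mul_transpose_eq_transpose_mul_of_mem_orthogonalGroup hP))
      fun k ω hω => h k 1 one_pos ω (by rwa [Dmat_one, inv_one, one_mul])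
    exact eq_Pstar_and_parity_of_isHermitian_of_posSemidef hσ hP hA hB
  · rintro ⟨rfl, hparity⟩ k τ hτ ω hω
    have hA := isHermitian_map_ofReal_iff.2 (isSymm_embedA_Pstar (n := n) σ₀)
    exact im_nonpos_of_mem_spectrum_inv_mul (posDef_Dmat hτ)
      (im_dotProduct_smul_add_I_smul_nonpos hA (posSemidef_neg_embedB_Pstar hσ hparity) k) hω

/-- For `m ≥ 2` with `σ₀ = ±1` (`m` odd) or `σ₀ = (-1)^(m/2)` (`m` even),
and `P` a signed permutation matrix, the following are equivalent: (i) for every `k ∈ ℝ`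
and `τ > 0`, every complex eigenvalue `ω` of `D_τ⁻¹ (k A + i B)` satisfies `Im ω ≤ 0`;
(ii) `P = P*`. -/
theorem stmt7 (m : ℕ) (hm : 2 ≤ m) (σ₀ : ℝ)
    (hσ : (Odd m ∧ (σ₀ = 1 ∨ σ₀ = -1)) ∨ (Even m ∧ σ₀ = (-1) ^ (m / 2)))
    (P : Matrix (Fin (m-1)) (Fin (m-1)) ℝ) (hP : IsSignedPerm P) :
    (∀ k τ : ℝ, 0 < τ →
      ∀ ω ∈ spectrum ℂ ((Dmat m τ)⁻¹ *
          ((k : ℂ) • (embedA m σ₀ P).map Complex.ofReal +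
            Complex.I • (embedB m P).map Complex.ofReal)),
        ω.im ≤ 0) ↔
    P = Pstar m σ₀ := by
  have hsign : σ₀ = 1 ∨ σ₀ = -1 := hσ.elim And.right fun h => h.2 ▸ neg_one_pow_eq_or ℝ _
  have hparity : Even m → σ₀ = (-1) ^ (m / 2) := fun heven =>
    hσ.elim (fun h => absurd heven (Nat.not_even_iff_odd.2 h.1)) And.right
  exact (stmt7_general m (one_le_two.trans hm) σ₀ hsign P hP.mem_orthogonalGroup).trans
    (and_iff_left hparity)
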